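/- The eigenfunction expansion of F converges to F on the whole closed interval [a,b] — that is, the symmetric partial sums S_N(x) = ∑_{n=−N}^{N} C_n (f_n(x), g_n(x)) converge to (F₁(x), F₂(x)) for every x ∈ [a,b] — if and only if F satisfies the same boundary conditions as the basis functions: F₁(a)cos α + F₂(a)sin α = 0 and F₁(b)cos β + F₂(b)sin β = 0. -/

import Mathlib

/-- The pair `(f,g)`, continuously differentiable on `[a,b]`, satisfies the
Dirac-type system with parameter `lam`:
`-g' + t g + (p - lam ρ) f = 0` and `f' + t f + (q - lam ρ) g = 0` on `[a,b]`. -/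
def SatisfiesDiracSystem (a b : ℝ) (p q t ρ : ℝ → ℝ) (lam : ℝ) (f g : ℝ → ℝ) : Prop :=
  ∃ f' g' : ℝ → ℝ,
    (∀ x ∈ Set.Icc a b, HasDerivWithinAt f (f' x) (Set.Icc a b) x) ∧
    (∀ x ∈ Set.Icc a b, HasDerivWithinAt g (g' x) (Set.Icc a b) x) ∧
    ContinuousOn f' (Set.Icc a b) ∧ ContinuousOn g' (Set.Icc a b) ∧
    (∀ x ∈ Set.Icc a b, -g' x + t x * g x + (p x - lam * ρ x) * f x = 0) ∧
    (∀ x ∈ Set.Icc a b, f' x + t x * f x + (q x - lam * ρ x) * g x = 0)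

/-- The separated boundary conditions
`f(a) cos α + g(a) sin α = 0` and `f(b) cos β + g(b) sin β = 0`. -/
def DiracBC (a b α β : ℝ) (f g : ℝ → ℝ) : Prop :=
  f a * Real.cos α + g a * Real.sin α = 0 ∧
  f b * Real.cos β + g b * Real.sin β = 0

/-- `lam` is an eigenvalue of the Dirac-type boundary-value problem. -/
def IsDiracEigenvalue (a b : ℝ) (p q t ρ : ℝ → ℝ) (α β lam : ℝ) : Prop :=
  ∃ f g : ℝ → ℝ,
    SatisfiesDiracSystem a b p q t ρ lam f g ∧
    (∃ x ∈ Set.Icc a b, (f x ≠ 0 ∨ g x ≠ 0)) ∧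
    DiracBC a b α β f g

/-!
Write `y = f + i g`, `J u = i u` and let `D` be the symmetric matrix `[[p, t], [t, q]]`. The system
reads `y' = J (D - λ ρ) y`, so that an eigenfunction solves `T y = λ y` for the operator
`T y = ρ⁻¹ (D y + J y')`, which is symmetric on the boundary conditions with respect to the weight
`ρ`. Choose a real `z` outside of the countable set of eigenvalues. Then `T - z` has an inverse `G`,
because the Volterra integral equation turns the boundary value problem into a compact perturbation
of the identity. The operator `G` is compact and symmetric on `L²(ρ dx)` and maps it continuously
into the continuous functions, so that applying `G` to the expansion of `h` in an orthonormal basis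
of eigenvectors of `G` gives a series that converges uniformly to `G h`. Off the kernel of `G` these
eigenvectors are the eigenfunctions of the problem, so that this series is the expansion of `G h`.
A continuously differentiable function that satisfies the boundary conditions has the form `G h`.
Conversely, the boundary conditions are linear in the values at `a` and at `b`, hence pass to
pointwise limits there.
-/

open MeasureTheory Set Filter
open scoped Topology symmDiff InnerProductSpace

section SpectralExpansion

variable {H X ι : Type*} [NormedAddCommGroup H] [InnerProductSpace ℝ H] [CompleteSpace H]
  [NormedAddCommGroup X] [NormedSpace ℝ X]

theorem apply_eq_zero_of_forall_inner_eigenvector_eq_zero {T : H →L[ℝ] H}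
    (hcpt : IsCompactOperator T) (hsymm : T.IsSymmetric) {v : ι → H}
    (hcomplete : ∀ s : ℝ, s ≠ 0 → ∀ w ≠ 0, T w = s • w → ∃ n, w ∈ ℝ ∙ v n)
    {h : H} (hh : ∀ n, ⟪v n, h⟫_ℝ = 0) : T h = 0 := by
  rw [← Submodule.mem_bot ℝ,
    ← ContinuousLinearMap.orthogonalComplement_iSup_eigenspaces_eq_bot hcpt hsymm,
    ← Submodule.iInf_orthogonal, Submodule.mem_iInf]
  intro s
  rw [Submodule.mem_orthogonal]
  intro w hw
  replace hw : T w = s • w := Module.End.mem_eigenspace_iff.mp hw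
  have hTw : ⟪w, T h⟫_ℝ = s * ⟪w, h⟫_ℝ := by
    rw [← real_inner_smul_left, ← hw]
    exact (hsymm w h).symm
  rcases eq_or_ne s 0 with rfl | hs
  · rw [hTw, zero_mul]
  rcases eq_or_ne w 0 with rfl | hw0
  · rw [inner_zero_left]
  · obtain ⟨n, hn⟩ := hcomplete s hs w hw0 hw
    obtain ⟨c, rfl⟩ := Submodule.mem_span_singleton.mp hn
    rw [hTw, real_inner_smul_left, hh, mul_zero, mul_zero]

theorem hasSum_inner_smul_of_compact_of_isSymmetric {J : X →L[ℝ] H} {G : H →L[ℝ] X} {e : ι → X}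
    (hJ : Function.Injective J) (hcpt : IsCompactOperator G)
    (hsymm : (J ∘L G).IsSymmetric) (he : Orthonormal ℝ (J ∘ e)) {μ : ι → ℝ}
    (heig : ∀ n, G (J (e n)) = μ n • e n)
    (hcomplete : ∀ s : ℝ, s ≠ 0 → ∀ w ≠ 0, J (G w) = s • w → ∃ n, w ∈ ℝ ∙ J (e n)) (h : H) :
    HasSum (fun n => ⟪J (e n), J (G h)⟫_ℝ • e n) (G h) := by
  obtain ⟨s, B, hs, hB⟩ := he.toSubtypeRange.exists_hilbertBasis_extension
  let i : ι → s := fun n => ⟨J (e n), hs ⟨n, rfl⟩⟩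
  have hi : Function.Injective i := fun m n hmn =>
    he.linearIndependent.injective (congrArg Subtype.val hmn)
  have hG : ∀ w ∉ Set.range i, G (B w) = 0 := fun w hw => hJ <| by
    rw [map_zero]
    refine apply_eq_zero_of_forall_inner_eigenvector_eq_zero (T := J ∘L G) (v := J ∘ e)
      (hcpt.clm_comp J) hsymm hcomplete fun n => ?_
    simpa [hB, i] using B.orthonormal.2 (i := i n) (j := w) fun hn => hw ⟨n, hn⟩
  have hsum : HasSum (fun w => ⟪B w, h⟫_ℝ • G (B w)) (G h) := by
    simpa [B.repr_apply_apply] using (B.hasSum_repr h).mapL G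
  rw [← hi.hasSum_iff fun w hw => by rw [hG w hw, smul_zero]] at hsum
  convert hsum using 2 with n
  have hcoeff : ⟪J (e n), J (G h)⟫_ℝ = μ n * ⟪J (e n), h⟫_ℝ := by
    rw [← real_inner_smul_left, ← map_smul, ← heig]
    exact (hsymm (J (e n)) h).symm
  simp [hB, i, heig, hcoeff, smul_smul, mul_comm]

end SpectralExpansion

section Fredholm

variable {X H : Type*} [NormedAddCommGroup X] [NormedSpace ℝ X] [CompleteSpace X]
  [NormedAddCommGroup H] [NormedSpace ℝ H]

theorem exists_isCompactOperator_forall_eq_add_iff {K : X →L[ℝ] X} (hK : IsCompactOperator K)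
    (hinj : ∀ y, y = K y → y = 0) {V : H →L[ℝ] X} (hV : IsCompactOperator V) :
    ∃ G : H →L[ℝ] X, IsCompactOperator G ∧ ∀ h y, y = K y + V h ↔ y = G h := by
  have hunit : IsUnit (1 - K) := by
    rcases hK.hasEigenvalue_or_mem_resolventSet one_ne_zero with hev | hres
    · obtain ⟨y, hy, hy0⟩ := hev.exists_hasEigenvector
      refine absurd (hinj y ?_) hy0
      simpa using (Module.End.mem_eigenspace_iff.mp hy).symm
    · simpa [spectrum.mem_resolventSet_iff] using hres
  obtain ⟨R, hR⟩ := hunit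
  refine ⟨R.inv ∘L V, hV.clm_comp R.inv, fun h y => ?_⟩
  have hleft (z : X) : R.inv (R.val z) = z := congr($R.inv_val z)
  have hright (z : X) : R.val (R.inv z) = z := congr($R.val_inv z)
  calc y = K y + V h ↔ (1 - K) y = V h := by simp [sub_eq_iff_eq_add']
    _ ↔ R.val y = V h := by rw [hR]
    _ ↔ y = R.inv (V h) := ⟨fun hy => by rw [← hy, hleft], fun hy => by rw [hy, hright]⟩

end Fredholm

section KernelOperator

variable {X H E : Type*} [TopologicalSpace X] [CompactSpace X]
  [NormedAddCommGroup H] [NormedSpace ℝ H] [NormedAddCommGroup E] [NormedSpace ℝ E]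

/-- The operator `h ↦ (x ↦ κ x h)`. -/
noncomputable def kernelOperator (κ : C(X, H →L[ℝ] E)) : H →L[ℝ] C(X, E) :=
  LinearMap.mkContinuous
    { toFun := fun h => ⟨fun x => κ x h, by fun_prop⟩
      map_add' := fun _ _ => by ext; simp
      map_smul' := fun _ _ => by ext; simp }
    ‖κ‖ fun h => (ContinuousMap.norm_le _ (by positivity)).mpr fun x =>
      (κ x).le_of_opNorm_le (κ.norm_coe_le_norm x) h

@[simp]
theorem kernelOperator_apply (κ : C(X, H →L[ℝ] E)) (h : H) (x : X) :
    kernelOperator κ h x = κ x h := rfl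

theorem equicontinuous_kernelOperator_closedBall (κ : C(X, H →L[ℝ] E)) (r : ℝ) :
    Equicontinuous fun (h : Metric.closedBall (0 : H) r) x => kernelOperator κ h x := by
  intro x₀
  rw [Metric.equicontinuousAt_iff_right]
  intro ε hε
  have hlim : Tendsto (fun x => dist (κ x₀) (κ x) * r) (𝓝 x₀) (𝓝 0) :=
    (by fun_prop : Continuous fun x => dist (κ x₀) (κ x) * r).tendsto' x₀ 0 (by simp)
  filter_upwards [hlim.eventually_lt_const hε] with x hx h
  calc dist (κ x₀ h) (κ x h) = ‖(κ x₀ - κ x) h‖ := dist_eq_norm _ _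
    _ ≤ ‖κ x₀ - κ x‖ * ‖(h : H)‖ := (κ x₀ - κ x).le_opNorm h
    _ ≤ dist (κ x₀) (κ x) * r := by
      rw [dist_eq_norm]
      gcongr
      exact mem_closedBall_zero_iff.mp h.2
    _ < ε := hx

theorem isCompactOperator_kernelOperator [ProperSpace E] (κ : C(X, H →L[ℝ] E)) :
    IsCompactOperator (kernelOperator κ) := by
  let Φ := ContinuousMap.linearIsometryBoundedOfCompact X E ℝ
  suffices hcpt : IsCompactOperator (Φ ∘ kernelOperator κ) from
    hcpt.clm_comp (Φ.symm : BoundedContinuousFunction X E →L[ℝ] C(X, E))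
  rw [isCompactOperator_iff_exists_mem_nhds_isCompact_closure_image]
  refine ⟨Metric.closedBall 0 1, Metric.closedBall_mem_nhds 0 one_pos,
    BoundedContinuousFunction.arzela_ascoli (Metric.closedBall 0 ‖κ‖)
      (isCompact_closedBall _ _) _ ?_ ?_⟩
  · rintro _ x ⟨h, hh, rfl⟩
    rw [mem_closedBall_zero_iff] at hh ⊢
    exact ((κ x).le_of_opNorm_le_of_le (κ.norm_coe_le_norm x) hh).trans_eq (mul_one _)
  · choose u hu hΦu using fun w : Φ ∘ kernelOperator κ '' Metric.closedBall 0 1 => w.2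
    convert (equicontinuous_kernelOperator_closedBall κ 1).comp fun w => ⟨u w, hu w⟩ with w
    exact congrArg _ (hΦu w).symm

end KernelOperator

section Volterra

variable {I E : Type*} [LinearOrder I] [TopologicalSpace I] [OrderTopology I]
  [FirstCountableTopology I] [MeasurableSpace I] [BorelSpace I]

theorem tendsto_measure_symmDiff_Iic (μ : Measure I) [IsFiniteMeasure μ] [NullSingletonClass μ]
    (x : I) : Tendsto (fun y => μ (Iic y ∆ Iic x)) (𝓝 x) (𝓝 0) := by
  rw [← measure_empty (μ := μ)]
  refine tendsto_measure_of_ae_tendsto_indicator_of_isFiniteMeasure (𝓝 x) .empty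
    (fun y => measurableSet_Iic.symmDiff measurableSet_Iic) ?_
  filter_upwards [compl_mem_ae_iff.mpr (measure_singleton (μ := μ) x)] with s hs
  rcases lt_or_gt_of_ne (show s ≠ x from hs) with hlt | hlt
  · filter_upwards [lt_mem_nhds hlt] with y hy
    simp [mem_symmDiff, hlt.le, hy.le]
  · filter_upwards [gt_mem_nhds hlt] with y hy
    simp [mem_symmDiff, hlt, hy]

variable [CompactSpace I] [NormedAddCommGroup E] [NormedSpace ℝ E] [CompleteSpace E]
  (μ : Measure I) [IsFiniteMeasure μ] [NullSingletonClass μ]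

variable (E) in
/-- The Volterra operator `h ↦ (x ↦ ∫ s ≤ x, h s ∂μ)` from `L²(μ)` to continuous functions; its
kernel at `x` pairs `h` with the indicator of `Iic x`. -/
noncomputable def volterra : Lp E 2 μ →L[ℝ] C(I, E) :=
  kernelOperator ⟨fun x => (ContinuousLinearMap.lsmul ℝ ℝ).lpPairing μ 2 2
      (indicatorConstLp 2 (measurableSet_Iic (a := x)) (measure_ne_top μ _) 1),
    ((ContinuousLinearMap.lsmul ℝ ℝ).lpPairing μ 2 2).continuous.comp
      (continuous_indicatorConstLp_set ENNReal.ofNat_ne_top (tendsto_measure_symmDiff_Iic μ))⟩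

theorem volterra_apply (h : Lp E 2 μ) (x : I) : volterra E μ h x = ∫ s in Iic x, h s ∂μ := by
  rw [volterra, kernelOperator_apply, ContinuousMap.coe_mk,
    ContinuousLinearMap.lpPairing_eq_integral, ← integral_indicator measurableSet_Iic]
  refine integral_congr_ae ?_
  filter_upwards [indicatorConstLp_coeFn (p := 2) (hs := measurableSet_Iic (a := x))
    (hμs := measure_ne_top μ _) (c := (1 : ℝ))] with s hs
  by_cases hsx : s ∈ Iic x <;> simp [hs, hsx]

theorem volterra_apply_of_isMin (h : Lp E 2 μ) {x : I} (hx : IsMin x) : volterra E μ h x = 0 := by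
  rw [volterra_apply, hx.Iic_eq, Measure.restrict_singleton, measure_singleton, zero_smul,
    integral_zero_measure]

theorem isCompactOperator_volterra [ProperSpace E] : IsCompactOperator (volterra E μ) :=
  isCompactOperator_kernelOperator _

end Volterra

section PointwiseOperators

variable {X E F : Type*} [TopologicalSpace X] [CompactSpace X] [NormedAddCommGroup E]
  [NormedSpace ℝ E] [NormedAddCommGroup F] [NormedSpace ℝ F]

/-- The operator on continuous functions that applies `Q x` to the value at `x`. -/
noncomputable def pointwiseApply (Q : C(X, E →L[ℝ] F)) : C(X, E) →L[ℝ] C(X, F) :=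
  LinearMap.mkContinuous
    { toFun := fun y => ⟨fun x => Q x (y x), by fun_prop⟩
      map_add' := fun _ _ => by ext; simp
      map_smul' := fun _ _ => by ext; simp }
    ‖Q‖ fun y => (ContinuousMap.norm_le _ (by positivity)).mpr fun x =>
      (Q x).le_of_opNorm_le_of_le (Q.norm_coe_le_norm x) (y.norm_coe_le_norm x)

@[simp]
theorem pointwiseApply_apply (Q : C(X, E →L[ℝ] F)) (y : C(X, E)) (x : X) :
    pointwiseApply Q y x = Q x (y x) := rfl

theorem compLpL_toLp [MeasurableSpace X] [BorelSpace X] [SecondCountableTopologyEither X E]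
    [SecondCountableTopologyEither X F] (μ : Measure X) [IsFiniteMeasure μ] (T : E →L[ℝ] F)
    (y : C(X, E)) :
    T.compLpL 2 μ (ContinuousMap.toLp 2 μ ℝ y) =
      ContinuousMap.toLp 2 μ ℝ (pointwiseApply (.const X T) y) := by
  refine Lp.ext ?_
  filter_upwards [T.coeFn_compLpL (ContinuousMap.toLp 2 μ ℝ y),
    ContinuousMap.coeFn_toLp (p := 2) (𝕜 := ℝ) μ y,
    ContinuousMap.coeFn_toLp (p := 2) (𝕜 := ℝ) μ (pointwiseApply (.const X T) y)] with x h₁ h₂ h₃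
  rw [h₁, h₂, h₃, pointwiseApply_apply, ContinuousMap.const_apply]

end PointwiseOperators

section WeightedDeriv

variable {a b : ℝ} {E F : Type*} [NormedAddCommGroup E] [NormedSpace ℝ E] [NormedAddCommGroup F]
  [NormedSpace ℝ F]

/-- The function `y` has derivative `w φ` on the interval `Icc a b`; both are extended constantly
outside of it, so that `HasDerivWithinAt` applies. -/
def HasWeightedDeriv (hab : a ≤ b) (w : C(Icc a b, ℝ)) (y φ : C(Icc a b, E)) : Prop :=
  ∀ x ∈ Icc a b, HasDerivWithinAt (IccExtend hab y) (IccExtend hab w x • IccExtend hab φ x)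
    (Icc a b) x

variable {hab : a ≤ b} {w : C(Icc a b, ℝ)}

namespace HasWeightedDeriv

theorem sub {y z φ ψ : C(Icc a b, E)} (hy : HasWeightedDeriv hab w y φ)
    (hz : HasWeightedDeriv hab w z ψ) : HasWeightedDeriv hab w (y - z) (φ - ψ) := fun x hx => by
  have := (hy x hx).sub (hz x hx)
  rwa [← smul_sub] at this

theorem clm_apply {y φ : C(Icc a b, E)} (hy : HasWeightedDeriv hab w y φ) (T : E →L[ℝ] F) :
    HasWeightedDeriv hab w (pointwiseApply (.const _ T) y) (pointwiseApply (.const _ T) φ) :=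
  fun x hx => by
  have := T.hasFDerivAt.comp_hasDerivWithinAt x (hy x hx)
  rwa [map_smul] at this

theorem eq_zero_of_left_eq_zero {y φ : C(Icc a b, E)} (hy : HasWeightedDeriv hab w y φ)
    {A : C(Icc a b, E →L[ℝ] E)} (hφ : ∀ x, φ x = A x (y x))
    (h0 : y ⟨a, left_mem_Icc.mpr hab⟩ = 0) : y = 0 := by
  let K : ℝ := ‖w‖ * ‖A‖
  have hzero := eq_zero_of_abs_deriv_le_mul_abs_self_of_eq_zero_right (K := K)
    y.continuous.Icc_extend'.continuousOn (a := a) (b := b)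
    (fun x hx => (hy x (Ico_subset_Icc_self hx)).mono_of_mem_nhdsWithin
      (mem_nhdsGE_iff_exists_Icc_subset.mpr ⟨b, hx.2, Icc_subset_Icc_left hx.1⟩))
    (by simpa using h0)
    fun x _ => ?_
  · ext x
    simpa using hzero x x.2
  · simp only [IccExtend, Function.comp_apply, hφ]
    rw [norm_smul, mul_assoc]
    gcongr
    · exact w.norm_coe_le_norm _
    · exact (A _).le_of_opNorm_le (A.norm_coe_le_norm _) _

end HasWeightedDeriv

end WeightedDeriv

section WeightedMeasure

variable {a b : ℝ}

/-- The measure `w x dx` on the interval `Icc a b`. -/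
noncomputable def weightedMeasure (w : C(Icc a b, ℝ)) : Measure (Icc a b) :=
  (volume.comap Subtype.val).withDensity fun x => ENNReal.ofReal (w x)

instance (w : C(Icc a b, ℝ)) : IsFiniteMeasure (weightedMeasure w) := by
  have : IsFiniteMeasure ((volume : Measure ℝ).comap (Subtype.val : Icc a b → ℝ)) :=
    ⟨by
      rw [comap_subtype_coe_apply measurableSet_Icc, image_univ, Subtype.range_coe]
      exact measure_Icc_lt_top⟩
  exact isFiniteMeasure_withDensity_ofReal
    ((BoundedContinuousFunction.mkOfCompact w).integrable _).2

instance (w : C(Icc a b, ℝ)) : NullSingletonClass (weightedMeasure w) where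
  measure_singleton x := withDensity_absolutelyContinuous _ _ <| by
    simp [comap_subtype_coe_apply measurableSet_Icc]

theorem isOpenPosMeasure_weightedMeasure (hab : a < b) {w : C(Icc a b, ℝ)} (hw : ∀ x, 0 < w x) :
    (weightedMeasure w).IsOpenPosMeasure := by
  have : ((volume : Measure ℝ).comap (Subtype.val : Icc a b → ℝ)).IsOpenPosMeasure := by
    refine ⟨fun U hU ⟨x, hx⟩ => ?_⟩
    obtain ⟨V, hV, rfl⟩ := isOpen_induced_iff.mp hU
    have hne : (V ∩ Ioo a b).Nonempty :=
      mem_closure_iff.mp (by rw [closure_Ioo hab.ne]; exact x.2) V hV hx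
    rw [comap_subtype_coe_apply measurableSet_Icc, Subtype.image_preimage_coe]
    have hsub : V ∩ Ioo a b ⊆ Icc a b ∩ V := fun s hs => ⟨Ioo_subset_Icc_self hs.2, hs.1⟩
    exact (((hV.inter isOpen_Ioo).measure_pos volume hne).trans_le (measure_mono hsub)).ne'
  refine Measure.AbsolutelyContinuous.isOpenPosMeasure
    (withDensity_absolutelyContinuous' (by fun_prop) (ae_of_all _ fun x => ?_))
  simpa using hw x

variable {E : Type*} [NormedAddCommGroup E] [NormedSpace ℝ E]

theorem setIntegral_Iic_weightedMeasure (hab : a ≤ b) {w : C(Icc a b, ℝ)} (hw : ∀ x, 0 < w x)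
    (g : ℝ → E) (x : Icc a b) :
    ∫ s in Iic x, g s ∂weightedMeasure w = ∫ s in a..x, IccExtend hab w s • g s := by
  have hind : (fun s : Icc a b =>
      (ENNReal.ofReal (w s)).toReal • (Iic x).indicator (fun s => g s) s) =
      fun s : Icc a b => (Iic (x : ℝ)).indicator (fun s => IccExtend hab w s • g s) s := by
    ext s
    by_cases hs : s ≤ x
    · simp [hs, (hw s).le]
    · simp [hs]
  rw [← integral_indicator measurableSet_Iic, weightedMeasure,
    integral_withDensity_eq_integral_toReal_smul (by fun_prop) (by simp), hind,
    integral_subtype_comap measurableSet_Icc, setIntegral_indicator measurableSet_Iic,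
    intervalIntegral.integral_of_le x.2.1, ← integral_Icc_eq_integral_Ioc]
  congr 2
  ext s
  simp only [mem_inter_iff, mem_Icc, mem_Iic]
  exact ⟨fun hs => ⟨hs.1.1, hs.2⟩, fun hs => ⟨⟨hs.1, hs.2.trans x.2.2⟩, hs.2⟩⟩

theorem integral_weightedMeasure (hab : a ≤ b) {w : C(Icc a b, ℝ)} (hw : ∀ x, 0 < w x)
    (g : ℝ → E) :
    ∫ s, g s ∂weightedMeasure w = ∫ s in a..b, IccExtend hab w s • g s := by
  rw [← setIntegral_Iic_weightedMeasure hab hw g ⟨b, right_mem_Icc.mpr hab⟩,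
    show Iic (⟨b, right_mem_Icc.mpr hab⟩ : Icc a b) = univ from eq_univ_of_forall fun s => s.2.2,
    setIntegral_univ]

variable [CompleteSpace E]

theorem volterra_toLp_apply (hab : a ≤ b) {w : C(Icc a b, ℝ)} (hw : ∀ x, 0 < w x)
    (φ : C(Icc a b, E)) (x : Icc a b) :
    volterra E (weightedMeasure w) (ContinuousMap.toLp 2 _ ℝ φ) x =
      ∫ s in a..x, IccExtend hab w s • IccExtend hab φ s := by
  rw [volterra_apply, ← setIntegral_Iic_weightedMeasure hab hw (IccExtend hab φ)]
  refine setIntegral_congr_ae measurableSet_Iic ?_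
  filter_upwards [ContinuousMap.coeFn_toLp (p := 2) (𝕜 := ℝ) (weightedMeasure w) φ] with s hs _
  rw [hs, IccExtend_val]

theorem hasWeightedDeriv_volterra_toLp (hab : a ≤ b) {w : C(Icc a b, ℝ)} (hw : ∀ x, 0 < w x)
    (φ : C(Icc a b, E)) :
    HasWeightedDeriv hab w (volterra E (weightedMeasure w) (ContinuousMap.toLp 2 _ ℝ φ)) φ := by
  intro x hx
  have hcont : Continuous fun s => IccExtend hab w s • IccExtend hab φ s :=
    w.continuous.Icc_extend'.smul φ.continuous.Icc_extend'
  refine (hcont.integral_hasStrictDerivAt a x).hasDerivAt.hasDerivWithinAt.congr_of_mem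
    (fun s hs => ?_) hx
  rw [IccExtend_of_mem hab _ hs, volterra_toLp_apply hab hw]

theorem HasWeightedDeriv.eq_const_add_volterra_toLp (hab : a ≤ b) {w : C(Icc a b, ℝ)}
    (hw : ∀ x, 0 < w x) {y φ : C(Icc a b, E)} (hy : HasWeightedDeriv hab w y φ) :
    y = ContinuousMap.const _ (y ⟨a, left_mem_Icc.mpr hab⟩) +
      volterra E (weightedMeasure w) (ContinuousMap.toLp 2 _ ℝ φ) := by
  have hcont : Continuous fun s => IccExtend hab w s • IccExtend hab φ s :=
    w.continuous.Icc_extend'.smul φ.continuous.Icc_extend'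
  ext x
  have hftc := intervalIntegral.integral_eq_sub_of_hasDerivAt_of_le x.2.1
    y.continuous.Icc_extend'.continuousOn
    (fun s hs => (hy s ⟨hs.1.le, hs.2.le.trans x.2.2⟩).hasDerivAt
      (Icc_mem_nhds hs.1 (hs.2.trans_le x.2.2)))
    (hcont.intervalIntegrable _ _)
  simp [volterra_toLp_apply hab hw, hftc]

theorem hasWeightedDeriv_iff_eq_const_add_volterra (hab : a ≤ b)
    {w : C(Icc a b, ℝ)} (hw : ∀ x, 0 < w x) {y φ : C(Icc a b, E)} :
    HasWeightedDeriv hab w y φ ↔ y = ContinuousMap.const _ (y ⟨a, left_mem_Icc.mpr hab⟩) +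
      volterra E (weightedMeasure w) (ContinuousMap.toLp 2 _ ℝ φ) := by
  refine ⟨HasWeightedDeriv.eq_const_add_volterra_toLp hab hw, fun hy x hx => ?_⟩
  refine ((hasWeightedDeriv_volterra_toLp hab hw φ x hx).const_add
    (y ⟨a, left_mem_Icc.mpr hab⟩)).congr_of_mem (fun s hs => ?_) hx
  rw [IccExtend_of_mem hab _ hs, IccExtend_of_mem hab _ hs]
  exact congr($hy ⟨s, hs⟩)

end WeightedMeasure

section Green

theorem inner_toLp_toLp {α E : Type*} [TopologicalSpace α] [CompactSpace α]
    [MeasurableSpace α] [BorelSpace α] [NormedAddCommGroup E] [InnerProductSpace ℝ E]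
    [SecondCountableTopologyEither α E] (μ : Measure α) [IsFiniteMeasure μ] (y z : C(α, E)) :
    ⟪ContinuousMap.toLp 2 μ ℝ y, ContinuousMap.toLp 2 μ ℝ z⟫_ℝ = ∫ x, ⟪y x, z x⟫_ℝ ∂μ := by
  rw [L2.inner_def]
  refine integral_congr_ae ?_
  filter_upwards [ContinuousMap.coeFn_toLp (p := 2) (𝕜 := ℝ) μ y,
    ContinuousMap.coeFn_toLp (p := 2) (𝕜 := ℝ) μ z] with x hy hz
  rw [hy, hz]

variable {a b : ℝ} {hab : a ≤ b} {w : C(Icc a b, ℝ)} {E : Type*} [NormedAddCommGroup E]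
  [InnerProductSpace ℝ E]

theorem HasWeightedDeriv.integral_inner_add_inner (hw : ∀ x, 0 < w x) {y z φ ψ : C(Icc a b, E)}
    (hy : HasWeightedDeriv hab w y φ) (hz : HasWeightedDeriv hab w z ψ) :
    ∫ x, (⟪y x, ψ x⟫_ℝ + ⟪φ x, z x⟫_ℝ) ∂weightedMeasure w =
      ⟪y ⟨b, right_mem_Icc.mpr hab⟩, z ⟨b, right_mem_Icc.mpr hab⟩⟫_ℝ -
        ⟪y ⟨a, left_mem_Icc.mpr hab⟩, z ⟨a, left_mem_Icc.mpr hab⟩⟫_ℝ := by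
  have hcont : Continuous fun x : ℝ => IccExtend hab w x • IccExtend hab
      (fun x => ⟪y x, ψ x⟫_ℝ + ⟪φ x, z x⟫_ℝ) x := by
    fun_prop
  have hmeas := integral_weightedMeasure hab hw
    (IccExtend hab fun x => ⟪y x, ψ x⟫_ℝ + ⟪φ x, z x⟫_ℝ)
  simp only [IccExtend_val] at hmeas
  have hderiv (x : ℝ) (hx : x ∈ Ioo a b) :
      HasDerivAt (fun x => ⟪IccExtend hab y x, IccExtend hab z x⟫_ℝ)
        (IccExtend hab w x • IccExtend hab (fun x => ⟪y x, ψ x⟫_ℝ + ⟪φ x, z x⟫_ℝ) x) x := by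
    have hmem := Icc_mem_nhds hx.1 hx.2
    refine (((hy x (Ioo_subset_Icc_self hx)).hasDerivAt hmem).inner ℝ
      ((hz x (Ioo_subset_Icc_self hx)).hasDerivAt hmem)).congr_deriv ?_
    simp [IccExtend, inner_smul_left, inner_smul_right, mul_add]
  rw [hmeas, intervalIntegral.integral_eq_sub_of_hasDerivAt_of_le hab
    (y.continuous.Icc_extend'.inner z.continuous.Icc_extend').continuousOn hderiv
    (hcont.intervalIntegrable _ _), IccExtend_left, IccExtend_left, IccExtend_right,
    IccExtend_right]

end Green

section LinearBoundaryValueProblem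

variable {a b : ℝ} {E : Type*} [NormedAddCommGroup E] [NormedSpace ℝ E] [FiniteDimensional ℝ E]

/-- The boundary condition `B y = 0` is built into the integral equation by using `y a - B y` as
initial value, which turns the problem into a compact perturbation of the identity. -/
theorem exists_isCompactOperator_solution_boundaryValueProblem (hab : a ≤ b) {w : C(Icc a b, ℝ)}
    (hw : ∀ x, 0 < w x) (A : C(Icc a b, E) →L[ℝ] C(Icc a b, E)) (B : C(Icc a b, E) →L[ℝ] E)
    (hinj : ∀ y, HasWeightedDeriv hab w y (A y) → B y = 0 → y = 0) :
    ∃ G : Lp E 2 (weightedMeasure w) →L[ℝ] C(Icc a b, E), IsCompactOperator G ∧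
      ∀ k y, (HasWeightedDeriv hab w y (A y + k) ∧ B y = 0) ↔
        y = G (ContinuousMap.toLp 2 _ ℝ k) := by
  have := FiniteDimensional.complete ℝ E
  have := FiniteDimensional.proper ℝ E
  let left : Icc a b := ⟨a, left_mem_Icc.mpr hab⟩
  let V := volterra E (weightedMeasure w)
  let J : C(Icc a b, E) →L[ℝ] Lp E 2 (weightedMeasure w) := ContinuousMap.toLp 2 _ ℝ
  let K : C(Icc a b, E) →L[ℝ] C(Icc a b, E) :=
    ContinuousLinearMap.const ℝ (Icc a b) ∘L (ContinuousMap.evalCLM ℝ left - B) + V ∘L J ∘L A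
  have hV : IsCompactOperator V := isCompactOperator_volterra _
  have hK : IsCompactOperator K :=
    ((isCompactOperator_of_locallyCompactSpace_dom _).clm_comp (ContinuousLinearMap.const ℝ _)).add
      (hV.comp_clm (J ∘L A))
  have hiff (k y) : (HasWeightedDeriv hab w y (A y + k) ∧ B y = 0) ↔ y = K y + V (J k) := by
    have hKy : K y + V (J k) = ContinuousMap.const _ (y left - B y) + V (J (A y + k)) := by
      ext x
      simp [K, add_assoc]
    have hVleft : V (J (A y + k)) left = 0 :=
      volterra_apply_of_isMin _ _ fun x _ => x.2.1
    rw [hKy, hasWeightedDeriv_iff_eq_const_add_volterra hab hw]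
    constructor
    · rintro ⟨hy, hB⟩
      rwa [hB, sub_zero]
    · intro hy
      have hval : y left = y left - B y + V (J (A y + k)) left := congr($hy left)
      have hB : B y = 0 := by rwa [hVleft, add_zero, eq_comm, sub_eq_self] at hval
      rw [hB, sub_zero] at hy
      exact ⟨hy, hB⟩
  obtain ⟨G, hG, hGiff⟩ := exists_isCompactOperator_forall_eq_add_iff hK
    (fun y hy => by
      obtain ⟨hd, hB⟩ := (hiff 0 y).mpr (by simpa using hy)
      exact hinj y (by simpa using hd) hB) hV
  exact ⟨G, hG, fun k y => (hiff k y).trans (hGiff _ _)⟩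

end LinearBoundaryValueProblem

section HamiltonianProblem

variable {a b : ℝ} {hab : a ≤ b} {E : Type*} [NormedAddCommGroup E] [InnerProductSpace ℝ E]

/-- A self-adjoint boundary value problem `y' = w J (Q y - z y)`, `B y = 0` on `Icc a b`, for
functions with values in a Euclidean space with orthogonal complex structure `J`. The boundary
condition is an equation `B y = 0` for a continuous linear map `B`, with as many components as the
unknown function. -/
structure HamiltonianProblem (hab : a ≤ b) (E : Type*) [NormedAddCommGroup E]
    [InnerProductSpace ℝ E] where
  w : C(Icc a b, ℝ)
  w_pos : ∀ x, 0 < w x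
  J : E →L[ℝ] E
  J_J : ∀ u, J (J u) = -u
  inner_J_left : ∀ u v, ⟪J u, v⟫_ℝ = -⟪u, J v⟫_ℝ
  Q : C(Icc a b, E →L[ℝ] E)
  Q_symm : ∀ x u v, ⟪Q x u, v⟫_ℝ = ⟪u, Q x v⟫_ℝ
  B : C(Icc a b, E) →L[ℝ] E
  B_symm : ∀ y z, B y = 0 → B z = 0 →
    ⟪J (y ⟨b, right_mem_Icc.mpr hab⟩), z ⟨b, right_mem_Icc.mpr hab⟩⟫_ℝ =
      ⟪J (y ⟨a, left_mem_Icc.mpr hab⟩), z ⟨a, left_mem_Icc.mpr hab⟩⟫_ℝ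

namespace HamiltonianProblem

variable (P : HamiltonianProblem hab E)

/-- The inclusion of the continuous functions into the weighted space `L²(w dx)`. -/
noncomputable def toL2 : C(Icc a b, E) →L[ℝ] Lp E 2 (weightedMeasure P.w) :=
  ContinuousMap.toLp 2 _ ℝ

/-- The function `y` solves the inhomogeneous problem `y' = w J (Q y - z y - k)`, `B y = 0`. With
the operator `T y = Q y + w⁻¹ J y'`, this says `(T - z) y = k`. -/
def IsSolution (z : ℝ) (k y : C(Icc a b, E)) : Prop :=
  HasWeightedDeriv hab P.w y
    (pointwiseApply (.const _ P.J) (pointwiseApply P.Q y - z • y - k)) ∧ P.B y = 0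

variable {P}

theorem injective_toL2 (hab' : a < b) : Function.Injective P.toL2 :=
  have := isOpenPosMeasure_weightedMeasure hab' P.w_pos
  ContinuousMap.toLp_injective _

theorem IsSolution.shift {z : ℝ} {k y : C(Icc a b, E)} (hy : P.IsSolution z k y) (z' : ℝ) :
    P.IsSolution z' (k + (z - z') • y) y := by
  have hshift : pointwiseApply P.Q y - z' • y - (k + (z - z') • y) =
      pointwiseApply P.Q y - z • y - k := by
    simp only [sub_smul]
    abel
  rwa [IsSolution, hshift]

theorem IsSolution.inner_toL2_eq {z : ℝ} {k₁ k₂ y₁ y₂ : C(Icc a b, E)}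
    (h₁ : P.IsSolution z k₁ y₁) (h₂ : P.IsSolution z k₂ y₂) :
    ⟪P.toL2 y₁, P.toL2 k₂⟫_ℝ = ⟪P.toL2 k₁, P.toL2 y₂⟫_ℝ := by
  have hgreen := (h₁.1.clm_apply P.J).integral_inner_add_inner P.w_pos h₂.1
  have hJ (u v : E) : ⟪P.J u, P.J v⟫_ℝ = ⟪u, v⟫_ℝ := by
    rw [P.inner_J_left, P.J_J, inner_neg_right, neg_neg]
  have hpointwise (x : Icc a b) :
      ⟪pointwiseApply (.const _ P.J) y₁ x,
          pointwiseApply (.const _ P.J) (pointwiseApply P.Q y₂ - z • y₂ - k₂) x⟫_ℝ +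
        ⟪pointwiseApply (.const _ P.J)
          (pointwiseApply (.const _ P.J) (pointwiseApply P.Q y₁ - z • y₁ - k₁)) x, y₂ x⟫_ℝ =
      ⟪k₁ x, y₂ x⟫_ℝ - ⟪y₁ x, k₂ x⟫_ℝ := by
    simp only [ContinuousMap.const_apply, hJ, P.J_J, ContinuousMap.sub_apply,
      ContinuousMap.smul_apply, pointwiseApply_apply, inner_sub_left, inner_sub_right,
      inner_neg_left, real_inner_smul_left, real_inner_smul_right, P.Q_symm]
    ring
  have hintegrable {y z : C(Icc a b, E)} :
      Integrable (fun x => ⟪y x, z x⟫_ℝ) (weightedMeasure P.w) :=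
    (by fun_prop : Continuous fun x => ⟪y x, z x⟫_ℝ).integrable_of_hasCompactSupport
      (HasCompactSupport.of_compactSpace _)
  simp only [hpointwise] at hgreen
  rw [integral_sub hintegrable hintegrable] at hgreen
  simp only [pointwiseApply_apply, ContinuousMap.const_apply, P.B_symm _ _ h₁.2 h₂.2, sub_self,
    sub_eq_zero] at hgreen
  rw [toL2, inner_toLp_toLp, inner_toLp_toLp, hgreen]

theorem isSymmetric_of_forall_isSolution {z : ℝ}
    {G : Lp E 2 (weightedMeasure P.w) →L[ℝ] C(Icc a b, E)}
    (hG : ∀ k, P.IsSolution z k (G (P.toL2 k))) : (P.toL2 ∘L G).IsSymmetric := by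
  have hdense : DenseRange P.toL2 := ContinuousMap.toLp_denseRange E _ ℝ (by norm_num)
  refine fun h₁ h₂ => hdense.induction_on₂ (isClosed_eq ?_ ?_) (fun k₁ k₂ => ?_) h₁ h₂
  · exact ((P.toL2 ∘L G).continuous.comp continuous_fst).inner continuous_snd
  · exact continuous_fst.inner ((P.toL2 ∘L G).continuous.comp continuous_snd)
  · exact (hG k₁).inner_toL2_eq (hG k₂)

theorem isSolution_of_hasWeightedDeriv {y φ : C(Icc a b, E)}
    (hy : HasWeightedDeriv hab P.w y φ) (hB : P.B y = 0) (z : ℝ) :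
    P.IsSolution z (pointwiseApply P.Q y - z • y + pointwiseApply (.const _ P.J) φ) y := by
  refine ⟨?_, hB⟩
  convert hy
  ext x
  simp [P.J_J]

theorem IsSolution.sub_smul {z : ℝ} {y₁ y₂ : C(Icc a b, E)} (h₁ : P.IsSolution z 0 y₁)
    (h₂ : P.IsSolution z 0 y₂) (c : ℝ) : P.IsSolution z 0 (y₁ - c • y₂) := by
  refine ⟨?_, by rw [map_sub, map_smul, h₁.2, h₂.2, smul_zero, sub_zero]⟩
  convert h₁.1.sub (h₂.1.clm_apply (c • 1)) using 1
  · ext x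
    simp
  · ext x
    simp only [pointwiseApply_apply, ContinuousMap.const_apply, ContinuousMap.sub_apply, map_sub,
      ContinuousMap.smul_apply, map_smul, sub_zero, smul_apply, one_apply_eq_self,
      smul_sub]
    abel

theorem IsSolution.eq_zero_of_left_eq_zero {z : ℝ} {y : C(Icc a b, E)} (hy : P.IsSolution z 0 y)
    (hleft : y ⟨a, left_mem_Icc.mpr hab⟩ = 0) : y = 0 :=
  hy.1.eq_zero_of_left_eq_zero (A := ⟨fun x => P.J ∘L (P.Q x - z • 1), by fun_prop⟩)
    (fun x => by simp) hleft

theorem IsSolution.mem_span_singleton {z : ℝ} {y₁ y₂ : C(Icc a b, E)} (h₁ : P.IsSolution z 0 y₁)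
    (h₂ : P.IsSolution z 0 y₂)
    (hleft : y₁ ⟨a, left_mem_Icc.mpr hab⟩ ∈ ℝ ∙ y₂ ⟨a, left_mem_Icc.mpr hab⟩) :
    y₁ ∈ ℝ ∙ y₂ := by
  obtain ⟨c, hc⟩ := Submodule.mem_span_singleton.mp hleft
  refine Submodule.mem_span_singleton.mpr ⟨c, (sub_eq_zero.mp ?_).symm⟩
  exact (h₁.sub_smul h₂ c).eq_zero_of_left_eq_zero (by simp [hc])

variable [FiniteDimensional ℝ E]

theorem exists_resolvent {z : ℝ} (hz : ∀ y, P.IsSolution z 0 y → y = 0) :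
    ∃ G : Lp E 2 (weightedMeasure P.w) →L[ℝ] C(Icc a b, E), IsCompactOperator G ∧
      ∀ k y, P.IsSolution z k y ↔ y = G (P.toL2 k) := by
  let A : C(Icc a b, E) →L[ℝ] C(Icc a b, E) :=
    pointwiseApply (.const _ P.J) ∘L (pointwiseApply P.Q - z • 1)
  have hA (y k : C(Icc a b, E)) : A y + pointwiseApply (.const _ (-P.J)) k =
      pointwiseApply (.const _ P.J) (pointwiseApply P.Q y - z • y - k) := by
    ext x
    simp [A, sub_eq_add_neg]
  obtain ⟨G, hG, hiff⟩ := exists_isCompactOperator_solution_boundaryValueProblem hab P.w_pos A P.B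
    fun y hy hB => hz y ⟨by rwa [← hA, map_zero, add_zero], hB⟩
  refine ⟨G ∘L (-P.J).compLpL 2 _, hG.comp_clm _, fun k y => ?_⟩
  rw [IsSolution, ← hA, hiff, ContinuousLinearMap.comp_apply, toL2, compLpL_toLp]

/-- The resolvent at a point `z` outside of the spectrum is compact and symmetric, its eigenvectors
are those of the problem, and `F` lies in its range. -/
theorem hasSum_inner_smul_of_isSolution (hab' : a < b) {ι : Type*} [Countable ι] {lam : ι → ℝ}
    {e : ι → C(Icc a b, E)} (heig : ∀ n, P.IsSolution (lam n) 0 (e n))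
    (hcomplete : ∀ z y, y ≠ 0 → P.IsSolution z 0 y → ∃ n, lam n = z ∧ y ∈ ℝ ∙ e n)
    (horth : Orthonormal ℝ (P.toL2 ∘ e)) {F φ : C(Icc a b, E)}
    (hF : HasWeightedDeriv hab P.w F φ) (hB : P.B F = 0) :
    HasSum (fun n => ⟪P.toL2 (e n), P.toL2 F⟫_ℝ • e n) F := by
  have hinj : Function.Injective P.toL2 := injective_toL2 hab'
  obtain ⟨z, hz⟩ : ∃ z, z ∉ range lam := by
    by_contra! hall
    exact Cardinal.not_countable_real ((countable_range lam).mono fun z _ => hall z)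
  obtain ⟨G, hcpt, hG⟩ := exists_resolvent (P := P) (z := z) fun y hy => by
    by_contra hy0
    obtain ⟨n, hn, -⟩ := hcomplete z y hy0 hy
    exact hz ⟨n, hn⟩
  have hGe (n : ι) : G (P.toL2 (e n)) = (lam n - z)⁻¹ • e n := by
    have hne : lam n - z ≠ 0 := sub_ne_zero.mpr fun hn => hz ⟨n, hn⟩
    rw [eq_inv_smul_iff₀ hne, ← map_smul, ← map_smul, eq_comm, ← hG]
    simpa using (heig n).shift z
  have heigenvector (s : ℝ) (hs : s ≠ 0) (v) (hv : v ≠ 0) (hGv : P.toL2 (G v) = s • v) :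
      ∃ n, v ∈ ℝ ∙ P.toL2 (e n) := by
    obtain ⟨y, rfl⟩ : ∃ y, P.toL2 y = v := ⟨s⁻¹ • G v, by rw [map_smul, hGv, inv_smul_smul₀ hs]⟩
    have hy : G (P.toL2 y) = s • y := hinj (by rw [hGv, map_smul])
    have hsol : P.IsSolution z (s⁻¹ • y) y := by
      rw [hG, map_smul, map_smul, hy, inv_smul_smul₀ hs]
    obtain ⟨n, -, hn⟩ := hcomplete (z + s⁻¹) y (by rintro rfl; exact hv (map_zero _))
      (by simpa using hsol.shift (z + s⁻¹))
    refine ⟨n, ?_⟩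
    simpa [Submodule.map_span] using Submodule.mem_map_of_mem (f := P.toL2.toLinearMap) hn
  rw [(hG _ F).mp (isSolution_of_hasWeightedDeriv hF hB z)]
  exact hasSum_inner_smul_of_compact_of_isSymmetric hinj hcpt
    (isSymmetric_of_forall_isSolution fun k => (hG k _).mpr rfl) horth hGe heigenvector _

end HamiltonianProblem

end HamiltonianProblem

section Dirac

variable {a b : ℝ}

/-- The matrix `[[p, t], [t, q]]`, as an operator on `ℝ² = ℂ`. -/
noncomputable def diracMatrix (p q t : ℝ) : ℂ →L[ℝ] ℂ :=
  p • Complex.reCLM.smulRight 1 + q • Complex.imCLM.smulRight Complex.I +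
    t • (Complex.reCLM.smulRight Complex.I + Complex.imCLM.smulRight 1)

@[simp]
theorem diracMatrix_apply (p q t : ℝ) (u : ℂ) :
    diracMatrix p q t u = ⟨p * u.re + t * u.im, t * u.re + q * u.im⟩ := by
  apply Complex.ext <;> simp [diracMatrix, add_comm]

theorem inner_diracMatrix_left (p q t : ℝ) (u v : ℂ) :
    ⟪diracMatrix p q t u, v⟫_ℝ = ⟪u, diracMatrix p q t v⟫_ℝ := by
  simp only [Complex.inner, diracMatrix_apply, Complex.mul_re, Complex.conj_re, Complex.conj_im]
  ring

/-- The functional `u ↦ u₁ cos θ + u₂ sin θ` of a separated boundary condition, on `ℝ² = ℂ`. -/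
noncomputable def boundaryForm (θ : ℝ) : ℂ →L[ℝ] ℝ :=
  Real.cos θ • Complex.reCLM + Real.sin θ • Complex.imCLM

theorem boundaryForm_apply (θ : ℝ) (u : ℂ) :
    boundaryForm θ u = u.re * Real.cos θ + u.im * Real.sin θ := by
  simp [boundaryForm, mul_comm]

theorem inner_I_mul_left (u v : ℂ) : ⟪Complex.I * u, v⟫_ℝ = u.re * v.im - u.im * v.re := by
  simp only [Complex.inner, Complex.mul_re, Complex.conj_re, Complex.conj_im, Complex.mul_im,
    Complex.I_re, Complex.I_im]
  ring

theorem inner_I_mul_eq_zero_of_boundaryForm_eq_zero {θ : ℝ} {u v : ℂ} (hu : boundaryForm θ u = 0)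
    (hv : boundaryForm θ v = 0) : ⟪Complex.I * u, v⟫_ℝ = 0 := by
  rw [boundaryForm_apply] at hu hv
  rw [inner_I_mul_left]
  linear_combination (Real.cos θ * v.im - Real.sin θ * v.re) * hu +
    (Real.sin θ * u.re - Real.cos θ * u.im) * hv -
    (u.re * v.im - u.im * v.re) * Real.sin_sq_add_cos_sq θ

theorem mem_span_singleton_of_inner_I_mul_eq_zero {u v : ℂ} (hv : v ≠ 0)
    (huv : ⟪Complex.I * u, v⟫_ℝ = 0) : u ∈ ℝ ∙ v := by
  have hdet : u.re * v.im = u.im * v.re := by rwa [inner_I_mul_left, sub_eq_zero] at huv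
  have hnorm : v.re * v.re + v.im * v.im ≠ 0 := by
    simpa [Complex.normSq_apply] using Complex.normSq_eq_zero.not.mpr hv
  refine Submodule.mem_span_singleton.mpr
    ⟨(u.re * v.re + u.im * v.im) / (v.re * v.re + v.im * v.im), Complex.ext ?_ ?_⟩
  · simp only [Complex.smul_re, smul_eq_mul, div_mul_eq_mul_div, div_eq_iff hnorm]
    linear_combination -v.im * hdet
  · simp only [Complex.smul_im, smul_eq_mul, div_mul_eq_mul_div, div_eq_iff hnorm]
    linear_combination v.re * hdet

/-- The boundary map of the separated boundary conditions; its two real components are encoded as a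
complex number. -/
noncomputable def separatedBoundaryMap (hab : a ≤ b) (α β : ℝ) : C(Icc a b, ℂ) →L[ℝ] ℂ :=
  (Complex.equivRealProdCLM.symm : ℝ × ℝ →L[ℝ] ℂ) ∘L
    ((boundaryForm α ∘L ContinuousMap.evalCLM ℝ ⟨a, left_mem_Icc.mpr hab⟩).prod
      (boundaryForm β ∘L ContinuousMap.evalCLM ℝ ⟨b, right_mem_Icc.mpr hab⟩))

theorem separatedBoundaryMap_eq_zero_iff (hab : a ≤ b) {α β : ℝ} {y : C(Icc a b, ℂ)} :
    separatedBoundaryMap hab α β y = 0 ↔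
      boundaryForm α (y ⟨a, left_mem_Icc.mpr hab⟩) = 0 ∧
        boundaryForm β (y ⟨b, right_mem_Icc.mpr hab⟩) = 0 := by
  simp [separatedBoundaryMap]

/-- The Dirac-type problem with separated boundary conditions, with the pair `(f, g)` encoded as
`f + i g`. -/
noncomputable def diracProblem (hab : a ≤ b) {p q t ρ : ℝ → ℝ} (hp : ContinuousOn p (Icc a b))
    (hq : ContinuousOn q (Icc a b)) (ht : ContinuousOn t (Icc a b))
    (hρ : ContinuousOn ρ (Icc a b)) (hρpos : ∀ x ∈ Icc a b, 0 < ρ x) (α β : ℝ) :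
    HamiltonianProblem hab ℂ where
  w := ⟨fun x => ρ x, hρ.domRestrict⟩
  w_pos x := hρpos x x.2
  J := ContinuousLinearMap.mul ℝ ℂ Complex.I
  J_J u := by simp [← mul_assoc]
  inner_J_left u v := by
    simp only [ContinuousLinearMap.mul_apply', real_inner_comm (Complex.I * v), inner_I_mul_left]
    ring
  Q := ⟨fun x => (ρ x)⁻¹ • diracMatrix (p x) (q x) (t x), by
    have hp' : Continuous fun x : Icc a b => p x := hp.domRestrict
    have hq' : Continuous fun x : Icc a b => q x := hq.domRestrict
    have ht' : Continuous fun x : Icc a b => t x := ht.domRestrict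
    have hρ' : Continuous fun x : Icc a b => ρ x := hρ.domRestrict
    unfold diracMatrix
    exact (hρ'.inv₀ fun x => (hρpos x x.2).ne').smul <|
      ((hp'.smul continuous_const).add (hq'.smul continuous_const)).add
        (ht'.smul continuous_const)⟩
  Q_symm x u v := by
    simp only [ContinuousMap.coe_mk, smul_apply, real_inner_smul_left, real_inner_smul_right,
      inner_diracMatrix_left]
  B := separatedBoundaryMap hab α β
  B_symm y z hy hz := by
    rw [separatedBoundaryMap_eq_zero_iff] at hy hz
    simp [inner_I_mul_eq_zero_of_boundaryForm_eq_zero hy.1 hz.1,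
      inner_I_mul_eq_zero_of_boundaryForm_eq_zero hy.2 hz.2]

section

variable {hab : a ≤ b} {p q t ρ : ℝ → ℝ} {hp : ContinuousOn p (Icc a b)}
  {hq : ContinuousOn q (Icc a b)} {ht : ContinuousOn t (Icc a b)} {hρ : ContinuousOn ρ (Icc a b)}
  {hρpos : ∀ x ∈ Icc a b, 0 < ρ x} {α β : ℝ}

theorem diracProblem_w_apply (x : Icc a b) :
    (diracProblem hab hp hq ht hρ hρpos α β).w x = ρ x := rfl

theorem diracProblem_J_apply (u : ℂ) :
    (diracProblem hab hp hq ht hρ hρpos α β).J u = Complex.I * u := rfl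

theorem diracProblem_Q_apply (x : Icc a b) :
    (diracProblem hab hp hq ht hρ hρpos α β).Q x = (ρ x)⁻¹ • diracMatrix (p x) (q x) (t x) := rfl

theorem diracProblem_w_smul_J_sub_smul (x : Icc a b) (z : ℝ) (u : ℂ) :
    (diracProblem hab hp hq ht hρ hρpos α β).w x • (diracProblem hab hp hq ht hρ hρpos α β).J
        ((diracProblem hab hp hq ht hρ hρpos α β).Q x u - z • u) =
      ⟨-(t x * u.re + (q x - z * ρ x) * u.im), t x * u.im + (p x - z * ρ x) * u.re⟩ := by
  rw [diracProblem_w_apply, diracProblem_J_apply, diracProblem_Q_apply, smul_apply,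
    ← mul_smul_comm, smul_sub, smul_inv_smul₀ (hρpos x x.2).ne', smul_smul, diracMatrix_apply]
  apply Complex.ext <;>
    simp only [Complex.mul_re, Complex.mul_im, Complex.I_re, Complex.I_im, Complex.sub_re,
      Complex.sub_im, Complex.smul_re, Complex.smul_im, smul_eq_mul] <;>
    ring

theorem mem_span_singleton_of_isSolution_diracProblem {z : ℝ} {y₁ y₂ : C(Icc a b, ℂ)}
    (h₁ : (diracProblem hab hp hq ht hρ hρpos α β).IsSolution z 0 y₁)
    (h₂ : (diracProblem hab hp hq ht hρ hρpos α β).IsSolution z 0 y₂) (hne : y₂ ≠ 0) :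
    y₁ ∈ ℝ ∙ y₂ :=
  h₁.mem_span_singleton h₂ <| mem_span_singleton_of_inner_I_mul_eq_zero
    (mt h₂.eq_zero_of_left_eq_zero hne) <| inner_I_mul_eq_zero_of_boundaryForm_eq_zero
    ((separatedBoundaryMap_eq_zero_iff hab).mp h₁.2).1
    ((separatedBoundaryMap_eq_zero_iff hab).mp h₂.2).1

/-- The continuous function `f + i g`, restricted to `Icc a b`. -/
def complexCurve {f g : ℝ → ℝ} (hf : ContinuousOn f (Icc a b)) (hg : ContinuousOn g (Icc a b)) :
    C(Icc a b, ℂ) where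
  toFun x := ⟨f x, g x⟩
  continuous_toFun :=
    Complex.equivRealProdCLM.symm.continuous.comp (hf.domRestrict.prodMk hg.domRestrict)

@[simp]
theorem complexCurve_apply {f g : ℝ → ℝ} (hf : ContinuousOn f (Icc a b))
    (hg : ContinuousOn g (Icc a b)) (x : Icc a b) : complexCurve hf hg x = ⟨f x, g x⟩ := rfl

theorem exists_complexCurve_eq (hab : a ≤ b) (y : C(Icc a b, ℂ)) :
    ∃ (f g : ℝ → ℝ) (hf : ContinuousOn f (Icc a b)) (hg : ContinuousOn g (Icc a b)),
      complexCurve hf hg = y := by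
  have hy : Continuous (IccExtend hab y) := y.continuous.Icc_extend'
  refine ⟨fun x => (IccExtend hab y x).re, fun x => (IccExtend hab y x).im,
    (Complex.continuous_re.comp hy).continuousOn, (Complex.continuous_im.comp hy).continuousOn, ?_⟩
  ext x
  simp

theorem hasWeightedDeriv_complexCurve_iff {f g : ℝ → ℝ} (hf : ContinuousOn f (Icc a b))
    (hg : ContinuousOn g (Icc a b)) {w : C(Icc a b, ℝ)} {φ : C(Icc a b, ℂ)} :
    HasWeightedDeriv hab w (complexCurve hf hg) φ ↔ ∀ x : Icc a b,
      HasDerivWithinAt f (w x • φ x).re (Icc a b) x ∧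
        HasDerivWithinAt g (w x • φ x).im (Icc a b) x := by
  have hext (x) (hx : x ∈ Icc a b) : IccExtend hab (complexCurve hf hg) x = ⟨f x, g x⟩ :=
    IccExtend_of_mem hab _ hx
  refine ⟨fun h x => ?_, fun h x hx => ?_⟩
  · have hx := h x x.2
    rw [IccExtend_val, IccExtend_val] at hx
    constructor
    · refine (Complex.reCLM.hasFDerivAt.comp_hasDerivWithinAt (x : ℝ) hx).congr_deriv (by simp)
        |>.congr_of_mem (fun s hs => ?_) x.2
      simp [hext s hs]
    · refine (Complex.imCLM.hasFDerivAt.comp_hasDerivWithinAt (x : ℝ) hx).congr_deriv (by simp)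
        |>.congr_of_mem (fun s hs => ?_) x.2
      simp [hext s hs]
  · have hpair := Complex.equivRealProdCLM.symm.toContinuousLinearMap.hasFDerivAt
      |>.comp_hasDerivWithinAt x ((h ⟨x, hx⟩).1.prodMk (h ⟨x, hx⟩).2)
    refine (hpair.congr_deriv ?_).congr_of_mem (fun s hs => ?_) hx
    · rw [IccExtend_of_mem hab _ hx, IccExtend_of_mem hab _ hx]
      apply Complex.ext <;> simp
    · rw [hext s hs]
      apply Complex.ext <;> simp

theorem satisfiesDiracSystem_iff (hp : ContinuousOn p (Icc a b)) (hq : ContinuousOn q (Icc a b))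
    (ht : ContinuousOn t (Icc a b)) (hρ : ContinuousOn ρ (Icc a b)) {lam : ℝ} {f g : ℝ → ℝ} :
    SatisfiesDiracSystem a b p q t ρ lam f g ↔ ∀ x ∈ Icc a b,
      HasDerivWithinAt f (-(t x * f x + (q x - lam * ρ x) * g x)) (Icc a b) x ∧
        HasDerivWithinAt g (t x * g x + (p x - lam * ρ x) * f x) (Icc a b) x := by
  constructor
  · rintro ⟨f', g', hf, hg, -, -, hg', hf'⟩ x hx
    exact ⟨(hf x hx).congr_deriv (by linarith [hf' x hx]),
      (hg x hx).congr_deriv (by linarith [hg' x hx])⟩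
  · intro h
    have hf : ContinuousOn f (Icc a b) := fun x hx => (h x hx).1.continuousWithinAt
    have hg : ContinuousOn g (Icc a b) := fun x hx => (h x hx).2.continuousWithinAt
    exact ⟨_, _, fun x hx => (h x hx).1, fun x hx => (h x hx).2, by fun_prop, by fun_prop,
      fun x _ => by ring, fun x _ => by ring⟩

theorem isSolution_complexCurve_iff {f g : ℝ → ℝ} (hf : ContinuousOn f (Icc a b))
    (hg : ContinuousOn g (Icc a b)) {lam : ℝ} :
    (diracProblem hab hp hq ht hρ hρpos α β).IsSolution lam 0 (complexCurve hf hg) ↔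
      SatisfiesDiracSystem a b p q t ρ lam f g ∧ DiracBC a b α β f g := by
  refine and_congr ?_ ?_
  · rw [hasWeightedDeriv_complexCurve_iff, satisfiesDiracSystem_iff hp hq ht hρ, Subtype.forall]
    refine forall₂_congr fun x hx => ?_
    have hfield := diracProblem_w_smul_J_sub_smul (hab := hab) (hp := hp) (hq := hq) (ht := ht)
      (hρ := hρ) (hρpos := hρpos) (α := α) (β := β) ⟨x, hx⟩ lam ⟨f x, g x⟩
    simp only [sub_zero, pointwiseApply_apply, ContinuousMap.const_apply, ContinuousMap.sub_apply,
      ContinuousMap.smul_apply, complexCurve_apply, hfield]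
  · exact (separatedBoundaryMap_eq_zero_iff hab).trans (by simp [boundaryForm_apply, DiracBC])

theorem inner_toL2_complexCurve {f₁ g₁ f₂ g₂ : ℝ → ℝ} (hf₁ : ContinuousOn f₁ (Icc a b))
    (hg₁ : ContinuousOn g₁ (Icc a b)) (hf₂ : ContinuousOn f₂ (Icc a b))
    (hg₂ : ContinuousOn g₂ (Icc a b)) :
    ⟪(diracProblem hab hp hq ht hρ hρpos α β).toL2 (complexCurve hf₁ hg₁),
        (diracProblem hab hp hq ht hρ hρpos α β).toL2 (complexCurve hf₂ hg₂)⟫_ℝ =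
      ∫ x in a..b, ρ x * (f₁ x * f₂ x + g₁ x * g₂ x) := by
  rw [HamiltonianProblem.toL2, inner_toLp_toLp]
  have hinner (x : Icc a b) : ⟪complexCurve hf₁ hg₁ x, complexCurve hf₂ hg₂ x⟫_ℝ =
      f₁ x * f₂ x + g₁ x * g₂ x := by
    simp only [complexCurve_apply, Complex.inner, Complex.mul_re, Complex.conj_re, Complex.conj_im]
    ring
  simp only [hinner]
  rw [integral_weightedMeasure hab (HamiltonianProblem.w_pos _) fun x => f₁ x * f₂ x + g₁ x * g₂ x]
  refine intervalIntegral.integral_congr fun x hx => ?_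
  rw [uIcc_of_le hab] at hx
  rw [IccExtend_of_mem hab _ hx, diracProblem_w_apply, smul_eq_mul]

theorem isDiracEigenvalue_of_isSolution {z : ℝ} {y : C(Icc a b, ℂ)}
    (hy : (diracProblem hab hp hq ht hρ hρpos α β).IsSolution z 0 y) (hne : y ≠ 0) :
    IsDiracEigenvalue a b p q t ρ α β z := by
  obtain ⟨f, g, hf, hg, rfl⟩ := exists_complexCurve_eq hab y
  obtain ⟨hsys, hbc⟩ := (isSolution_complexCurve_iff hf hg).mp hy
  refine ⟨f, g, hsys, ?_, hbc⟩
  by_contra! hzero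
  exact hne <| ContinuousMap.ext fun x => Complex.ext (hzero x x.2).1 (hzero x x.2).2

theorem exists_hasWeightedDeriv_complexCurve (hab : a < b) {w : C(Icc a b, ℝ)} (hw : ∀ x, w x ≠ 0)
    {F₁ F₂ : ℝ → ℝ} (hF₁ : ContDiffOn ℝ 1 F₁ (Icc a b)) (hF₂ : ContDiffOn ℝ 1 F₂ (Icc a b)) :
    ∃ φ, HasWeightedDeriv hab.le w (complexCurve hF₁.continuousOn hF₂.continuousOn) φ := by
  have hu : UniqueDiffOn ℝ (Icc a b) := uniqueDiffOn_Icc hab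
  let F' : C(Icc a b, ℂ) := complexCurve (hF₁.continuousOn_derivWithin hu le_rfl)
    (hF₂.continuousOn_derivWithin hu le_rfl)
  refine ⟨⟨fun x => (w x)⁻¹ • F' x, (w.continuous.inv₀ hw).smul F'.continuous⟩,
    (hasWeightedDeriv_complexCurve_iff _ _).mpr fun x => ?_⟩
  simp only [ContinuousMap.coe_mk, smul_inv_smul₀ (hw x)]
  exact ⟨(hF₁.differentiableOn one_ne_zero x x.2).hasDerivWithinAt,
    (hF₂.differentiableOn one_ne_zero x x.2).hasDerivWithinAt⟩

end

section

variable {p q t ρ : ℝ → ℝ} {α β : ℝ} {ι : Type*} {lam C : ι → ℝ} {f g : ι → ℝ → ℝ} {F₁ F₂ : ℝ → ℝ}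

theorem hasSum_smul_complexCurve_of_diracBC [Countable ι] [DecidableEq ι] (hab : a < b)
    (hp : ContinuousOn p (Icc a b)) (hq : ContinuousOn q (Icc a b)) (ht : ContinuousOn t (Icc a b))
    (hρ : ContinuousOn ρ (Icc a b)) (hρpos : ∀ x ∈ Icc a b, 0 < ρ x)
    (hf : ∀ n, ContinuousOn (f n) (Icc a b)) (hg : ∀ n, ContinuousOn (g n) (Icc a b))
    (heig : ∀ n, SatisfiesDiracSystem a b p q t ρ (lam n) (f n) (g n) ∧
      DiracBC a b α β (f n) (g n))
    (hcomplete : ∀ μ, IsDiracEigenvalue a b p q t ρ α β μ → ∃ n, lam n = μ)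
    (horth : ∀ m n,
      (∫ x in a..b, ρ x * (f m x * f n x + g m x * g n x)) = if m = n then 1 else 0)
    (hF₁ : ContDiffOn ℝ 1 F₁ (Icc a b)) (hF₂ : ContDiffOn ℝ 1 F₂ (Icc a b))
    (hC : ∀ n, C n = ∫ x in a..b, ρ x * (f n x * F₁ x + g n x * F₂ x))
    (hF : DiracBC a b α β F₁ F₂) :
    HasSum (fun n => C n • complexCurve (hf n) (hg n))
      (complexCurve hF₁.continuousOn hF₂.continuousOn) := by
  let P := diracProblem hab.le hp hq ht hρ hρpos α β
  let e (n : ι) : C(Icc a b, ℂ) := complexCurve (hf n) (hg n)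
  have hsol (n : ι) : P.IsSolution (lam n) 0 (e n) := (isSolution_complexCurve_iff _ _).mpr (heig n)
  have honb : Orthonormal ℝ (P.toL2 ∘ e) := by
    refine orthonormal_iff_ite.mpr fun m n => ?_
    simpa using (inner_toL2_complexCurve ..).trans (horth m n)
  have hne (n : ι) : e n ≠ 0 := fun h => honb.ne_zero n (by simp [h])
  have hspan (z : ℝ) (y) (hy : y ≠ 0) (hyz : P.IsSolution z 0 y) :
      ∃ n, lam n = z ∧ y ∈ ℝ ∙ e n := by
    obtain ⟨n, rfl⟩ := hcomplete z (isDiracEigenvalue_of_isSolution hyz hy)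
    exact ⟨n, rfl, mem_span_singleton_of_isSolution_diracProblem hyz (hsol n) (hne n)⟩
  obtain ⟨φ, hφ⟩ := exists_hasWeightedDeriv_complexCurve hab (fun x => (P.w_pos x).ne') hF₁ hF₂
  convert P.hasSum_inner_smul_of_isSolution hab hsol hspan honb hφ ?_ using 3 with n
  · rw [hC]
    exact (inner_toL2_complexCurve ..).symm
  · exact (separatedBoundaryMap_eq_zero_iff hab.le).mpr (by simpa [boundaryForm_apply] using! hF)

theorem diracBC_of_hasSum {L : SummationFilter ι} [L.NeBot]
    (hbc : ∀ n, DiracBC a b α β (f n) (g n))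
    (ha : HasSum (fun n => (C n * f n a, C n * g n a)) (F₁ a, F₂ a) L)
    (hb : HasSum (fun n => (C n * f n b, C n * g n b)) (F₁ b, F₂ b) L) :
    DiracBC a b α β F₁ F₂ := by
  have hlimit {θ u v : ℝ} {r s : ι → ℝ} (hrs : ∀ n, r n * Real.cos θ + s n * Real.sin θ = 0)
      (hsum : HasSum (fun n => (C n * r n, C n * s n)) (u, v) L) :
      u * Real.cos θ + v * Real.sin θ = 0 := by
    have hform := hsum.mapL
      (Real.cos θ • ContinuousLinearMap.fst ℝ ℝ ℝ + Real.sin θ • ContinuousLinearMap.snd ℝ ℝ ℝ)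
    have hterm (n : ι) : Real.cos θ * (C n * r n) + Real.sin θ * (C n * s n) = 0 := by
      linear_combination C n * hrs n
    simp only [add_apply, smul_apply, ContinuousLinearMap.coe_fst', ContinuousLinearMap.coe_snd',
      smul_eq_mul, hterm] at hform
    linear_combination hform.unique hasSum_zero
  exact ⟨hlimit (fun n => (hbc n).1) ha, hlimit (fun n => (hbc n).2) hb⟩

theorem dirac_expansion_converges_on_closed_iff_bc_general [Countable ι] [DecidableEq ι]
    (L : SummationFilter ι) [L.NeBot] [L.LeAtTop] (hab : a < b)
    (hp : ContinuousOn p (Icc a b)) (hq : ContinuousOn q (Icc a b)) (ht : ContinuousOn t (Icc a b))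
    (hρ : ContinuousOn ρ (Icc a b)) (hρpos : ∀ x ∈ Icc a b, 0 < ρ x)
    (heig : ∀ n, SatisfiesDiracSystem a b p q t ρ (lam n) (f n) (g n) ∧
      DiracBC a b α β (f n) (g n))
    (hcomplete : ∀ μ, IsDiracEigenvalue a b p q t ρ α β μ → ∃ n, lam n = μ)
    (horth : ∀ m n,
      (∫ x in a..b, ρ x * (f m x * f n x + g m x * g n x)) = if m = n then 1 else 0)
    (hF₁ : ContDiffOn ℝ 1 F₁ (Icc a b)) (hF₂ : ContDiffOn ℝ 1 F₂ (Icc a b))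
    (hC : ∀ n, C n = ∫ x in a..b, ρ x * (f n x * F₁ x + g n x * F₂ x)) :
    (∀ x ∈ Icc a b, HasSum (fun n => (C n * f n x, C n * g n x)) (F₁ x, F₂ x) L) ↔
      DiracBC a b α β F₁ F₂ := by
  refine ⟨fun h => diracBC_of_hasSum (fun n => (heig n).2) (h a (left_mem_Icc.mpr hab.le))
    (h b (right_mem_Icc.mpr hab.le)), fun hF x hx => ?_⟩
  have hf (n : ι) : ContinuousOn (f n) (Icc a b) :=
    let ⟨_, _, hf, _⟩ := (heig n).1
    HasDerivWithinAt.continuousOn hf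
  have hg (n : ι) : ContinuousOn (g n) (Icc a b) :=
    let ⟨_, _, _, hg, _⟩ := (heig n).1
    HasDerivWithinAt.continuousOn hg
  have hsum := hasSum_smul_complexCurve_of_diracBC hab hp hq ht hρ hρpos hf hg heig hcomplete
    horth hF₁ hF₂ hC hF
  have hx := hsum.mapL (Complex.equivRealProdCLM.toContinuousLinearMap ∘L
    ContinuousMap.evalCLM ℝ ⟨x, hx⟩)
  exact (by simpa using hx : HasSum (fun n => (C n * f n x, C n * g n x)) (F₁ x, F₂ x)).mono_left
    L.le_atTop

end

end Dirac

/-- The eigenfunction expansion of `F` converges to `F` on the whole closed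
interval `[a,b]` if and only if `F` satisfies the same boundary conditions as
the basis functions. -/
theorem dirac_expansion_converges_on_closed_iff_bc
    (a b : ℝ) (hab : a < b)
    (p q t ρ : ℝ → ℝ)
    (hp : ContDiffOn ℝ 1 p (Set.Icc a b)) (hq : ContDiffOn ℝ 1 q (Set.Icc a b))
    (ht : ContDiffOn ℝ 1 t (Set.Icc a b)) (hρ : ContDiffOn ℝ 1 ρ (Set.Icc a b))
    (hρpos : ∀ x ∈ Set.Icc a b, 0 < ρ x)
    (α β : ℝ) (hα : α ∈ Set.Ico 0 (2 * Real.pi)) (hβ : β ∈ Set.Ico 0 (2 * Real.pi))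
    -- the listing of all eigenvalues with eigenfunctions
    (lam : ℤ → ℝ) (f g : ℤ → ℝ → ℝ)
    (heig : ∀ n : ℤ, SatisfiesDiracSystem a b p q t ρ (lam n) (f n) (g n) ∧
      DiracBC a b α β (f n) (g n))
    (hord : ∀ n : ℤ, lam n ≤ lam (n + 1))
    (hgrow : Filter.Tendsto (fun n : ℤ => |lam n|) Filter.cofinite Filter.atTop)
    (hcomplete : ∀ μ : ℝ, IsDiracEigenvalue a b p q t ρ α β μ → ∃ n, lam n = μ)
    (horth : ∀ m n : ℤ,
      (∫ x in a..b, ρ x * (f m x * f n x + g m x * g n x)) = if m = n then 1 else 0)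
    -- the expanded function and its expansion coefficients
    (F₁ F₂ : ℝ → ℝ)
    (hF₁ : ContDiffOn ℝ 1 F₁ (Set.Icc a b)) (hF₂ : ContDiffOn ℝ 1 F₂ (Set.Icc a b))
    (C : ℤ → ℝ)
    (hC : ∀ n, C n = ∫ x in a..b, ρ x * (f n x * F₁ x + g n x * F₂ x)) :
    (∀ x ∈ Set.Icc a b,
      Filter.Tendsto
        (fun N : ℕ =>
          ((∑ n ∈ Finset.Icc (-(N : ℤ)) (N : ℤ), C n * f n x),
           (∑ n ∈ Finset.Icc (-(N : ℤ)) (N : ℤ), C n * g n x)))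
        Filter.atTop (nhds (F₁ x, F₂ x))) ↔
    (F₁ a * Real.cos α + F₂ a * Real.sin α = 0 ∧
     F₁ b * Real.cos β + F₂ b * Real.sin β = 0) := by
  simpa [HasSum, -SummationFilter.symmetricIcc_filter, SummationFilter.symmetricIcc_eq_map_Icc_nat,
    Function.comp_def, prod_mk_sum, DiracBC] using
    dirac_expansion_converges_on_closed_iff_bc_general (SummationFilter.symmetricIcc ℤ) hab
      hp.continuousOn hq.continuousOn ht.continuousOn hρ.continuousOn hρpos heig hcomplete horth
      hF₁ hF₂ hC
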